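/- arXiv:2107.09389 — 6 statements merged into one kernel-verified Lean document; each statement's English description precedes it below -/
import Mathlib

section
/- The map d squares to zero: d ∘ d = 0 as a k-linear endomorphism of R. (This makes (R, d) a differential graded algebra.) -/
/-!
The prescribed values give the signed Leibniz rule
`d (ξ x) = d ξ * x - ξ * d x` for a generator `ξ` and any `x`, because words span the algebra
(`map_ι_mul`). Expanding `d (d (ξ x))` with it, the terms `d ξ * d x` cancel and what remains is
`d (d ξ) * x + ξ * d (d x)`. Here `d (d ξ)` vanishes by coassociativity of the splitting
`i ↦ (j, k)` with `j + k = i` (`sum_dgen_mul_ι`): splitting the left or the right factor once more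
yields the same sum of triples, with opposite signs. Induction on words concludes.
-/

/- `FreeAlgebra k ℕ` models the free algebra `R` on noncommuting generators
`ξ₁, ξ₂, ξ₃, …`; the generator of index `n : ℕ` represents `ξ_{n+1}`. -/

/-- The element `d(ξ_{n+1}) = Σ_{j+k=n+1, j,k ≥ 1} ξ_j ξ_k` of the free algebra. -/
noncomputable def dgen (k : Type*) [Field k] (n : ℕ) : FreeAlgebra k ℕ :=
  ∑ a ∈ Finset.range n, FreeAlgebra.ι k a * FreeAlgebra.ι k (n - 1 - a)

/-- The basis word `ξ_{i₁+1} ⋯ ξ_{i_m+1}` corresponding to a list `[i₁, …, i_m]`. -/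
noncomputable def word (k : Type*) [Field k] (w : List ℕ) : FreeAlgebra k ℕ :=
  (w.map (FreeAlgebra.ι k)).prod

/-- The prescribed value of the differential on a basis word:
`d(ξ_{i₁}⋯ξ_{i_m}) = Σ_s (−1)^{s−1} ξ_{i₁}⋯ξ_{i_{s−1}} d(ξ_{i_s}) ξ_{i_{s+1}}⋯ξ_{i_m}`. -/
noncomputable def dWord (k : Type*) [Field k] : List ℕ → FreeAlgebra k ℕ
  | [] => 0
  | i :: w => dgen k i * word k w - FreeAlgebra.ι k i * dWord k w

/-- Words span the free algebra, so a linear map is determined by its values on them. -/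
theorem linearMap_ext_word {k : Type*} [Field k] {f g : FreeAlgebra k ℕ →ₗ[k] FreeAlgebra k ℕ}
    (h : ∀ w, f (word k w) = g (word k w)) : f = g := by
  have hs : Submodule.span k
      (Submonoid.closure (Set.range (FreeAlgebra.ι k : ℕ → _)) : Set (FreeAlgebra k ℕ)) = ⊤ := by
    rw [← Algebra.adjoin_eq_span, FreeAlgebra.adjoin_range_ι, Algebra.top_toSubmodule]
  refine LinearMap.ext_on hs fun x hx => ?_
  obtain ⟨l, hl, rfl⟩ := Submonoid.exists_list_of_mem_closure hx
  obtain ⟨w, rfl⟩ : l ∈ Set.range (List.map (FreeAlgebra.ι k)) := by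
    rw [Set.range_list_map]
    exact hl
  exact h w

/-- The signed Leibniz rule for a generator times an arbitrary element. -/
theorem map_ι_mul {k : Type*} [Field k] {d : FreeAlgebra k ℕ →ₗ[k] FreeAlgebra k ℕ}
    (hd : ∀ w : List ℕ, d (word k w) = dWord k w) (i : ℕ) (x : FreeAlgebra k ℕ) :
    d (FreeAlgebra.ι k i * x) = dgen k i * x - FreeAlgebra.ι k i * d x := by
  have h : d ∘ₗ LinearMap.mulLeft k (FreeAlgebra.ι k i) =
      LinearMap.mulLeft k (dgen k i) - LinearMap.mulLeft k (FreeAlgebra.ι k i) ∘ₗ d := by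
    refine linearMap_ext_word fun w => ?_
    have hw : FreeAlgebra.ι k i * word k w = word k (i :: w) := by simp [word]
    simp [hw, hd, dWord]
  simpa using LinearMap.congr_fun h x

/-- Coassociativity of the splitting: both sides are the sum of all `ξ_p ξ_q ξ_r` with
`p + q + r + 2 = n` in the shifted indexing, whence `d (d ξ) = 0` on generators. -/
theorem sum_dgen_mul_ι (k : Type*) [Field k] (n : ℕ) :
    ∑ a ∈ Finset.range n, dgen k a * FreeAlgebra.ι k (n - 1 - a) =
      ∑ a ∈ Finset.range n, FreeAlgebra.ι k a * dgen k (n - 1 - a) := by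
  simp only [dgen, Finset.sum_mul, Finset.mul_sum, Finset.sum_sigma']
  -- On the left `(a, c)` is the triple `(c, a - 1 - c, n - 1 - a)`;
  -- on the right `(c, b)` is the triple `(c, b, n - 2 - c - b)`.
  refine Finset.sum_bij' (fun x _ => ⟨x.2, x.1 - 1 - x.2⟩) (fun y _ => ⟨y.1 + 1 + y.2, y.1⟩)
    ?_ ?_ ?_ ?_ ?_
  · rintro ⟨a, c⟩ h
    simp only [Finset.mem_sigma, Finset.mem_range] at h ⊢
    omega
  · rintro ⟨c, b⟩ h
    simp only [Finset.mem_sigma, Finset.mem_range] at h ⊢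
    omega
  · rintro ⟨a, c⟩ h
    simp only [Finset.mem_sigma, Finset.mem_range] at h
    simp only [Sigma.mk.injEq, heq_eq_eq, and_true]
    omega
  · rintro ⟨c, b⟩ h
    simp only [Sigma.mk.injEq, heq_eq_eq, true_and]
    omega
  · rintro ⟨a, c⟩ h
    simp only [Finset.mem_sigma, Finset.mem_range] at h
    have e : n - 1 - c - 1 - (a - 1 - c) = n - 1 - a := by omega
    simp only [e, mul_assoc]

/-- On `d ξ * x` the derivation acts only on `x`, since `d (d ξ) = 0`. -/
theorem map_dgen_mul {k : Type*} [Field k] {d : FreeAlgebra k ℕ →ₗ[k] FreeAlgebra k ℕ}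
    (hd : ∀ w : List ℕ, d (word k w) = dWord k w) (i : ℕ) (x : FreeAlgebra k ℕ) :
    d (dgen k i * x) = dgen k i * d x := by
  have h : d (dgen k i * x) =
      (∑ a ∈ Finset.range i, dgen k a * FreeAlgebra.ι k (i - 1 - a)) * x -
      (∑ a ∈ Finset.range i, FreeAlgebra.ι k a * dgen k (i - 1 - a)) * x + dgen k i * d x := by
    conv_lhs => rw [dgen]
    conv_rhs => enter [2]; rw [dgen]
    simp only [Finset.sum_mul, map_sum, ← Finset.sum_sub_distrib, ← Finset.sum_add_distrib]
    refine Finset.sum_congr rfl fun a _ => ?_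
    rw [mul_assoc, map_ι_mul hd, map_ι_mul hd]
    noncomm_ring
  rw [h, sum_dgen_mul_ι, sub_self, zero_add]

/-- the unique `k`-linear map `d` on `R` whose value on each basis
word is as prescribed satisfies `d ∘ d = 0`. -/
theorem d_comp_d_eq_zero (k : Type*) [Field k]
    (d : FreeAlgebra k ℕ →ₗ[k] FreeAlgebra k ℕ)
    (hd : ∀ w : List ℕ, d (word k w) = dWord k w) :
    d ∘ₗ d = 0 := by
  refine linearMap_ext_word fun w => ?_
  simp only [LinearMap.comp_apply, LinearMap.zero_apply]
  induction w with
  | nil => rw [hd, dWord, map_zero]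
  | cons i w ih =>
    rw [hd] at ih
    rw [hd, dWord, map_sub, map_dgen_mul hd, map_ι_mul hd, ih, hd, mul_zero, sub_zero, sub_self]
end

section
/- Let δ : R → R be the unique k-linear map defined on basis words by: δ(ξ₁ · ξ_i · w) = ξ_{i+1} · w for every i ≥ 1 and every (possibly empty) word w, and δ sends every other word (the empty word, all single generators, and all words whose first letter is ξ_j with j ≥ 2) to 0. Let π : R → R be the k-linear projection sending 1 to 1, ξ₁ to ξ₁, and every other word to 0. Then δ ∘ d + d ∘ δ = id_R − π; that is, δ is a contracting homotopy from the identity of R to the projection onto the k-span of 1 and ξ₁. -/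
theorem word_nil (k : Type*) [Field k] : word k [] = 1 := by
  simp [word]

theorem word_cons (k : Type*) [Field k] (i : ℕ) (w : List ℕ) :
    word k (i :: w) = FreeAlgebra.ι k i * word k w := by
  simp [word]

theorem word_append (k : Type*) [Field k] (v w : List ℕ) :
    word k (v ++ w) = word k v * word k w := by
  simp [word]

theorem span_word (k : Type*) [Field k] : Submodule.span k (Set.range (word k)) = ⊤ := by
  rw [eq_top_iff]
  rintro x -
  induction x using FreeAlgebra.induction with
  | grade0 r =>
    rw [Algebra.algebraMap_eq_smul_one, ← word_nil]
    exact Submodule.smul_mem _ _ (Submodule.subset_span ⟨_, rfl⟩)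
  | grade1 i =>
    refine Submodule.subset_span ⟨[i], ?_⟩
    simp [word]
  | mul a b ha hb =>
    have hab := Submodule.mul_mem_mul ha hb
    rw [Submodule.span_mul_span] at hab
    refine Submodule.span_mono ?_ hab
    rintro _ ⟨_, ⟨v, rfl⟩, _, ⟨w, rfl⟩, rfl⟩
    exact ⟨v ++ w, word_append k v w⟩
  | add a b ha hb => exact Submodule.add_mem _ ha hb

/-- In the one-based indexing of the generators: `d(ξ_{n+2}) = ξ₁ ξ_{n+1} + Σ ξ_{j+1} ξ_k`, summed
over `j + k = n + 1`. -/
theorem dgen_succ (k : Type*) [Field k] (n : ℕ) :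
    dgen k (n + 1) = FreeAlgebra.ι k 0 * FreeAlgebra.ι k n +
      ∑ a ∈ Finset.range n, FreeAlgebra.ι k (a + 1) * FreeAlgebra.ι k (n - 1 - a) := by
  rw [dgen, Finset.sum_range_succ', add_comm]
  congr 1
  refine Finset.sum_congr rfl fun a _ => ?_
  rw [show n + 1 - 1 - (a + 1) = n - 1 - a by omega]

/-- if `d` is the differential, `δ` is the unique linear map with
`δ(ξ₁ ξ_i w) = ξ_{i+1} w` and zero on all other words, and `π` is the linear
projection onto the span of `1` and `ξ₁` (killing all other words), then
`δ ∘ d + d ∘ δ = id − π`.  (Generator of index `n` represents `ξ_{n+1}`, so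
`ξ₁` is the generator of index `0`.) -/
theorem contracting_homotopy (k : Type*) [Field k]
    (d δ π : FreeAlgebra k ℕ →ₗ[k] FreeAlgebra k ℕ)
    (hd : ∀ w : List ℕ, d (word k w) = dWord k w)
    (hδ₁ : ∀ (i : ℕ) (w : List ℕ), δ (word k (0 :: i :: w)) = word k ((i + 1) :: w))
    (hδ₂ : δ (word k []) = 0)
    (hδ₃ : ∀ i : ℕ, δ (word k [i]) = 0)
    (hδ₄ : ∀ (i : ℕ) (w : List ℕ), i ≠ 0 → δ (word k (i :: w)) = 0)
    (hπ₁ : π (word k []) = word k [])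
    (hπ₂ : π (word k [0]) = word k [0])
    (hπ₃ : ∀ w : List ℕ, w ≠ [] → w ≠ [0] → π (word k w) = 0) :
    δ ∘ₗ d + d ∘ₗ δ = LinearMap.id - π := by
  have kill : ∀ i : ℕ, i ≠ 0 → ∀ x, δ (FreeAlgebra.ι k i * x) = 0 := by
    intro i hi x
    have h : δ ∘ₗ LinearMap.mulLeft k (FreeAlgebra.ι k i) = 0 :=
      linearMap_ext_word fun w => by simp [← word_cons, hδ₄ i w hi]
    simpa using LinearMap.congr_fun h x
  have merge : ∀ (i : ℕ) x,
      δ (FreeAlgebra.ι k 0 * (FreeAlgebra.ι k i * x)) = FreeAlgebra.ι k (i + 1) * x := by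
    intro i x
    have h : δ ∘ₗ LinearMap.mulLeft k (FreeAlgebra.ι k 0) ∘ₗ
        LinearMap.mulLeft k (FreeAlgebra.ι k i) = LinearMap.mulLeft k (FreeAlgebra.ι k (i + 1)) :=
      linearMap_ext_word fun w => by simp [← word_cons, hδ₁ i w]
    simpa using LinearMap.congr_fun h x
  have recover : ∀ (n : ℕ) x, δ (dgen k (n + 1) * x) = FreeAlgebra.ι k (n + 1) * x := by
    intro n x
    rw [dgen_succ, add_mul, Finset.sum_mul, map_add, map_sum, mul_assoc, merge,
      Finset.sum_eq_zero, add_zero]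
    intro a _
    rw [mul_assoc, kill _ a.succ_ne_zero]
  have dgen_zero : dgen k 0 = 0 := by simp [dgen]
  refine linearMap_ext_word fun w => ?_
  simp only [LinearMap.add_apply, LinearMap.comp_apply, LinearMap.sub_apply, LinearMap.id_apply, hd]
  match w with
  | [] => simp [dWord, hδ₂, hπ₁]
  | [0] => simp [dWord, hδ₃, hπ₂, dgen_zero]
  | (n + 1) :: w =>
    rw [hπ₃ _ (by simp) (by simp), hδ₄ _ _ n.succ_ne_zero, dWord, map_sub, recover,
      kill _ n.succ_ne_zero, word_cons]
    simp
  | 0 :: i :: w =>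
    rw [hπ₃ _ (by simp) (by simp), hδ₁, hd]
    -- `δ` turns `ξ₁ d(ξ_i)` into the sum that appears in the recursion `dgen_succ` for `d(ξ_{i+1})`.
    have shift : δ (FreeAlgebra.ι k 0 * (dgen k i * word k w)) =
        (∑ a ∈ Finset.range i,
          FreeAlgebra.ι k (a + 1) * FreeAlgebra.ι k (i - 1 - a)) * word k w := by
      simp only [dgen, Finset.sum_mul, Finset.mul_sum, map_sum, mul_assoc, merge]
    simp only [dWord, dgen_zero, zero_mul, zero_sub, map_neg, mul_sub, map_sub, merge, shift,
      dgen_succ, add_mul, word_cons, mul_assoc]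
    abel
end

section
/- The following hold: (a) the image of ψ is the ideal I_i = (t, x^i) of S; (b) ker ψ = im φ; (c) ker φ = im φ. In other words, the 2-periodic complex ⋯ → S² →(φ) S² →(φ) S² →(ψ) I_i → 0 is an exact (free) resolution of the ideal (t, x^i), corresponding to the matrix factorisation [[t, x^i],[0, −t]]·[[t, x^i],[0, −t]] = t²·Id of the relation t² = 0. -/
/-!
In `S` the annihilator of `t xⁿ` is `(t)`, since `t` is prime in `k[x, t]` and does not divide `x`.
If `t u + xⁱ v = 0`, multiplying by `t` gives `t xⁱ v = 0`, so `v = -t w`; substituting,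
`t (u - xⁱ w) = 0`, so `u = t w' + xⁱ w` and `(u, v) = φ (w', w)`. This yields
`ker φ ⊆ ker ψ ⊆ im φ`, and `im φ ⊆ ker φ` is `t² = 0`.
-/


set_option synthInstance.maxHeartbeats 1000000
set_option maxHeartbeats 1000000

/-- The ring `S = k[x, t]/(t²)`, with `x = X 0` and `t = X 1`. -/
abbrev Sring (k : Type*) [Field k] : Type _ :=
  MvPolynomial (Fin 2) k ⧸
    (Ideal.span {(MvPolynomial.X 1 : MvPolynomial (Fin 2) k) ^ 2})

/-- The element `x` of `S`. -/
noncomputable def xS (k : Type*) [Field k] : Sring k :=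
  Ideal.Quotient.mk _ (MvPolynomial.X 0)

/-- The element `t` of `S`. -/
noncomputable def tS (k : Type*) [Field k] : Sring k :=
  Ideal.Quotient.mk _ (MvPolynomial.X 1)

/-- Multiplication by `t xⁿ` on `S` has kernel `(t)`: lifting to `k[x, t]`, the relation
`t² ∣ t xⁿ p` gives `t ∣ xⁿ p`, and `t` is a prime not dividing `x`. -/
theorem tS_dvd_of_mul_eq_zero (k : Type*) [Field k] (n : ℕ) (v : Sring k)
    (h : tS k * xS k ^ n * v = 0) : ∃ w, v = tS k * w := by
  obtain ⟨p, rfl⟩ := Ideal.Quotient.mk_surjective v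
  have hX : Prime (MvPolynomial.X 1 : MvPolynomial (Fin 2) k) := MvPolynomial.X_prime
  rw [tS, xS, ← map_pow, ← map_mul, ← map_mul, Ideal.Quotient.eq_zero_iff_mem,
    Ideal.mem_span_singleton, pow_two, mul_assoc, mul_dvd_mul_iff_left hX.ne_zero] at h
  rcases hX.dvd_or_dvd h with h | ⟨q, rfl⟩
  · have h' := hX.dvd_of_dvd_pow h
    rw [MvPolynomial.X_dvd_X] at h'
    simp at h'
  · exact ⟨Ideal.Quotient.mk _ q, by rw [map_mul, tS]⟩

theorem tS_mul_self (k : Type*) [Field k] : tS k * tS k = 0 := by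
  rw [tS, ← map_mul, Ideal.Quotient.eq_zero_iff_mem, ← pow_two]
  exact Ideal.mem_span_singleton_self _

/-- for `φ(u,v) = (tu + xⁱv, −tv)` and `ψ(u,v) = tu + xⁱv`
(so `ψ ∘ φ = 0` and `φ ∘ φ = 0`): (a) `im ψ = (t, xⁱ)`; (b) `ker ψ = im φ`;
(c) `ker φ = im φ`; i.e. the 2-periodic complex given by the matrix
factorisation `[[t, xⁱ],[0, −t]]` of `t² = 0` is an exact free resolution of
the ideal `(t, xⁱ)`. -/
theorem matrix_factorisation_resolution (k : Type*) [Field k] (i : ℕ) (hi : 1 ≤ i)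
    (φ : Sring k × Sring k →ₗ[Sring k] Sring k × Sring k)
    (hφ : ∀ u v : Sring k, φ (u, v) = (tS k * u + xS k ^ i * v, -(tS k * v)))
    (ψ : Sring k × Sring k →ₗ[Sring k] Sring k)
    (hψ : ∀ u v : Sring k, ψ (u, v) = tS k * u + xS k ^ i * v) :
    LinearMap.range ψ = (Ideal.span {tS k, xS k ^ i} : Ideal (Sring k)) ∧
    LinearMap.ker ψ = LinearMap.range φ ∧
    LinearMap.ker φ = LinearMap.range φ := by
  have ht := tS_mul_self k
  have hexact : LinearMap.ker ψ ≤ LinearMap.range φ := by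
    rintro ⟨u, v⟩ h
    rw [LinearMap.mem_ker, hψ] at h
    obtain ⟨w, hw⟩ := tS_dvd_of_mul_eq_zero k i v (by
      linear_combination tS k * h - u * ht)
    obtain ⟨w', hw'⟩ := tS_dvd_of_mul_eq_zero k 0 (u + xS k ^ i * w) (by
      rw [hw] at h
      linear_combination h)
    refine ⟨(w', -w), ?_⟩
    rw [hφ, Prod.mk.injEq]
    exact ⟨by linear_combination -hw', by linear_combination -hw⟩
  have hle : LinearMap.ker φ ≤ LinearMap.ker ψ := by
    rintro ⟨u, v⟩ h
    rw [LinearMap.mem_ker, hφ] at h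
    rw [LinearMap.mem_ker, hψ]
    exact congrArg Prod.fst h
  have hcomp : LinearMap.range φ ≤ LinearMap.ker φ := by
    rintro _ ⟨⟨u, v⟩, rfl⟩
    rw [LinearMap.mem_ker, hφ, hφ, Prod.mk_eq_zero]
    exact ⟨by linear_combination u * ht, by linear_combination v * ht⟩
  refine ⟨?_, le_antisymm hexact (hcomp.trans hle), le_antisymm (hle.trans hexact) hcomp⟩
  ext z
  rw [Ideal.mem_span_pair]
  constructor
  · rintro ⟨⟨u, v⟩, rfl⟩
    exact ⟨u, v, by rw [hψ]; ring⟩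
  · rintro ⟨u, v, rfl⟩
    exact ⟨(u, v), by rw [hψ]; ring⟩
end

section
/- The following hold: (a) the image of ψ′ is the ideal I_i = (t, x^i) of S′; (b) ker ψ′ = im φ′; (c) ker φ′ = im φ′. In other words, the 2-periodic complex ⋯ → S′² →(φ′) S′² →(φ′) S′² →(ψ′) I_i → 0 is an exact (free) resolution of the ideal (t, x^i), corresponding to the matrix factorisation [[t, x^i],[x^{h−i}, −t]]·[[t, x^i],[x^{h−i}, −t]] = (t² + x^h)·Id of the relation t² + x^h = 0. -/
/-!
Write `f = t² + xʰ`, viewed in the polynomial ring `P = k[x, t]`. The only substantial point is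
`ker ψ ⊆ im φ`. If `ψ (u, v) = 0`, choose lifts `U, V` to `P`; then `t U + xⁱ V = f W` for some `W`,
which rearranges to `t (U - t W) = xⁱ (x^{h-i} W - V)`. As `t` is a prime not dividing `xⁱ`, it divides
`x^{h-i} W - V`, say with quotient `B`, and cancelling `t` gives `U = t W + xⁱ B`,
`V = x^{h-i} W - t B`; that is, `(u, v) = φ (w, b)` for the classes `w, b` of `W, B`.
The inclusion `im φ ⊆ ker φ` is the
matrix identity `φ² = f · Id = 0`, and the rest follows since `ψ` is the first component of `φ`,
so that `ker φ ⊆ ker ψ`.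
-/

set_option synthInstance.maxHeartbeats 1000000
set_option maxHeartbeats 1000000

/-- The ring `S′ = k[x, t]/(t² + xʰ)`, with `x = X 0` and `t = X 1`. -/
abbrev S'ring (k : Type*) [Field k] (h : ℕ) : Type _ :=
  MvPolynomial (Fin 2) k ⧸
    (Ideal.span {(MvPolynomial.X 1 : MvPolynomial (Fin 2) k) ^ 2 +
      (MvPolynomial.X 0 : MvPolynomial (Fin 2) k) ^ h})

/-- The element `x` of `S′`. -/
noncomputable def xS' (k : Type*) [Field k] (h : ℕ) : S'ring k h :=
  Ideal.Quotient.mk _ (MvPolynomial.X 0)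

/-- The element `t` of `S′`. -/
noncomputable def tS' (k : Type*) [Field k] (h : ℕ) : S'ring k h :=
  Ideal.Quotient.mk _ (MvPolynomial.X 1)

theorem tS'_sq_add (k : Type*) [Field k] (h : ℕ) : tS' k h ^ 2 + xS' k h ^ h = 0 := by
  have := Ideal.Quotient.eq_zero_iff_mem.2 (Ideal.mem_span_singleton_self
    ((MvPolynomial.X 1 : MvPolynomial (Fin 2) k) ^ 2 + (MvPolynomial.X 0) ^ h))
  rwa [map_add, map_pow, map_pow] at this

/-- The inclusion `ker ψ ⊆ im φ`, in coordinates. -/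
theorem exists_of_psi_eq_zero (k : Type*) [Field k] (h i : ℕ) (hi : i ≤ h) (u v : S'ring k h)
    (huv : tS' k h * u + xS' k h ^ i * v = 0) :
    ∃ w b : S'ring k h, u = tS' k h * w + xS' k h ^ i * b ∧
      v = xS' k h ^ (h - i) * w - tS' k h * b := by
  obtain ⟨U, rfl⟩ := Ideal.Quotient.mk_surjective u
  obtain ⟨V, rfl⟩ := Ideal.Quotient.mk_surjective v
  rw [tS', xS', ← map_pow, ← map_mul, ← map_mul, ← map_add, Ideal.Quotient.eq_zero_iff_mem,
    Ideal.mem_span_singleton] at huv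
  obtain ⟨W, hW⟩ := huv
  have hx : (MvPolynomial.X 0 : MvPolynomial (Fin 2) k) ^ h =
      MvPolynomial.X 0 ^ i * MvPolynomial.X 0 ^ (h - i) := by
    rw [← pow_add, Nat.add_sub_cancel' hi]
  rw [hx] at hW
  have hprime : Prime (MvPolynomial.X 1 : MvPolynomial (Fin 2) k) := MvPolynomial.X_prime
  have hkey : (MvPolynomial.X 1 : MvPolynomial (Fin 2) k) * (U - MvPolynomial.X 1 * W) =
      MvPolynomial.X 0 ^ i * (MvPolynomial.X 0 ^ (h - i) * W - V) := by
    linear_combination hW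
  have hndvd : ¬ (MvPolynomial.X 1 : MvPolynomial (Fin 2) k) ∣ MvPolynomial.X 0 ^ i := fun hd => by
    simpa [MvPolynomial.X_dvd_X] using hprime.dvd_of_dvd_pow hd
  obtain ⟨B, hB⟩ := (hprime.dvd_or_dvd (Dvd.intro _ hkey)).resolve_left hndvd
  have hU : U = MvPolynomial.X 1 * W + MvPolynomial.X 0 ^ i * B := by
    apply mul_left_cancel₀ hprime.ne_zero
    linear_combination hkey + MvPolynomial.X 0 ^ i * hB
  have hV : V = MvPolynomial.X 0 ^ (h - i) * W - MvPolynomial.X 1 * B := by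
    linear_combination -hB
  refine ⟨Ideal.Quotient.mk _ W, Ideal.Quotient.mk _ B, ?_, ?_⟩
  · rw [tS', xS', ← map_pow, ← map_mul, ← map_mul, ← map_add, ← hU]
  · rw [tS', xS', ← map_pow, ← map_mul, ← map_mul, ← map_sub, ← hV]

/-- for `φ′(u,v) = (tu + xⁱv, x^{h−i}u − tv)` and
`ψ′(u,v) = tu + xⁱv` (so `ψ′ ∘ φ′ = 0` and `φ′ ∘ φ′ = 0`):
(a) `im ψ′ = (t, xⁱ)`; (b) `ker ψ′ = im φ′`; (c) `ker φ′ = im φ′`; i.e. the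
2-periodic complex given by the matrix factorisation `[[t, xⁱ],[x^{h−i}, −t]]`
of `t² + xʰ = 0` is an exact free resolution of the ideal `(t, xⁱ)`. -/
theorem matrix_factorisation_resolution' (k : Type*) [Field k] (h i : ℕ)
    (hh : 2 ≤ h) (hi1 : 1 ≤ i) (hi2 : i ≤ h - 1)
    (φ : S'ring k h × S'ring k h →ₗ[S'ring k h] S'ring k h × S'ring k h)
    (hφ : ∀ u v : S'ring k h,
      φ (u, v) = (tS' k h * u + xS' k h ^ i * v, xS' k h ^ (h - i) * u - tS' k h * v))
    (ψ : S'ring k h × S'ring k h →ₗ[S'ring k h] S'ring k h)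
    (hψ : ∀ u v : S'ring k h, ψ (u, v) = tS' k h * u + xS' k h ^ i * v) :
    LinearMap.range ψ = (Ideal.span {tS' k h, xS' k h ^ i} : Ideal (S'ring k h)) ∧
    LinearMap.ker ψ = LinearMap.range φ ∧
    LinearMap.ker φ = LinearMap.range φ := by
  have hle : i ≤ h := hi2.trans (Nat.sub_le h 1)
  have hrel : tS' k h ^ 2 + xS' k h ^ i * xS' k h ^ (h - i) = 0 := by
    rw [← pow_add, Nat.add_sub_cancel' hle, tS'_sq_add]
  have hker : LinearMap.ker ψ ≤ LinearMap.range φ := by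
    rintro ⟨u, v⟩ huv
    rw [LinearMap.mem_ker, hψ] at huv
    obtain ⟨w, b, rfl, rfl⟩ := exists_of_psi_eq_zero k h i hle u v huv
    exact ⟨(w, b), hφ w b⟩
  have hφψ : LinearMap.ker φ ≤ LinearMap.ker ψ := by
    rintro ⟨u, v⟩ huv
    rw [LinearMap.mem_ker, hφ] at huv
    rw [LinearMap.mem_ker, hψ]
    exact congrArg Prod.fst huv
  have hφφ : LinearMap.range φ ≤ LinearMap.ker φ := by
    rintro _ ⟨⟨u, v⟩, rfl⟩
    rw [LinearMap.mem_ker, hφ, hφ]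
    refine Prod.ext ?_ ?_
    · change _ = (0 : S'ring k h)
      linear_combination u * hrel
    · change _ = (0 : S'ring k h)
      linear_combination v * hrel
  refine ⟨?_, le_antisymm hker (hφφ.trans hφψ), le_antisymm (hφψ.trans hker) hφφ⟩
  ext y
  rw [LinearMap.mem_range, Ideal.mem_span_pair]
  constructor
  · rintro ⟨⟨u, v⟩, rfl⟩
    exact ⟨u, v, by rw [hψ]; ring⟩
  · rintro ⟨u, v, rfl⟩
    exact ⟨(u, v), by rw [hψ]; ring⟩
end

section
/- There is a unique S′-linear endomorphism α of the ideal I = (t, x^i) of S′ with α(t) = −x^{h−i} and α(x^i) = t. It satisfies α ∘ α = multiplication by −x^{h−2i} on I. Moreover every S′-linear endomorphism of I is of the form s₁·α + s₂·id_I for some s₁, s₂ ∈ S′; that is, End_{S′}(I) is generated as an S′-module by the identity and α. -/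
/-!
The variable `x` is a nonzerodivisor on `S′`: it is prime in `k[x, t]` and does not divide
`t² + xʰ`. Hence an endomorphism `φ` of `I` is determined by `c = φ(xⁱ)`, through
`xⁱ φ(m) = φ(xⁱ m) = c m`, that is, `φ` is multiplication by the fraction `c / xⁱ`.
The map `α` is multiplication by `t / xⁱ`; it preserves `I` because `t · xⁱ = xⁱ · t` and
`t · t = xⁱ · (-x^{h-i})` with `h - i ≥ i`, and its square is `t² / x^{2i} = -x^{h-2i}`.
For general `φ`, writing `c = s₁ t + s₂ xⁱ ∈ I` gives `φ = s₁ α + s₂ id`.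
-/

set_option synthInstance.maxHeartbeats 1000000
set_option maxHeartbeats 1000000

/-- The ideal `I = (t, xⁱ)` of `S′`, regarded as an `S′`-module. -/
noncomputable abbrev I'mod (k : Type*) [Field k] (h i : ℕ) :
    Submodule (S'ring k h) (S'ring k h) :=
  Ideal.span {tS' k h, xS' k h ^ i}

/-- The element `t` of `I`. -/
noncomputable def tEl' (k : Type*) [Field k] (h i : ℕ) : I'mod k h i :=
  ⟨tS' k h, Submodule.subset_span (Set.mem_insert _ _)⟩

/-- The element `xⁱ` of `I`. -/
noncomputable def xEl' (k : Type*) [Field k] (h i : ℕ) : I'mod k h i :=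
  ⟨xS' k h ^ i, Submodule.subset_span (Set.mem_insert_of_mem _ rfl)⟩

theorem tS'_sq (k : Type*) [Field k] (h : ℕ) : tS' k h * tS' k h = -(xS' k h ^ h) := by
  rw [eq_neg_iff_add_eq_zero, ← pow_two]
  unfold tS' xS'
  rw [← map_pow, ← map_pow, ← map_add]
  exact Ideal.Quotient.eq_zero_iff_mem.mpr (Ideal.subset_span rfl)

theorem xS'_mul_eq_zero (k : Type*) [Field k] (h : ℕ) (hh : 2 ≤ h) (a : S'ring k h)
    (ha : xS' k h * a = 0) : a = 0 := by
  obtain ⟨f, rfl⟩ := Ideal.Quotient.mk_surjective a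
  unfold xS' at ha
  rw [← map_mul, Ideal.Quotient.eq_zero_iff_mem, Ideal.mem_span_singleton] at ha
  rw [Ideal.Quotient.eq_zero_iff_mem, Ideal.mem_span_singleton]
  obtain ⟨g, hg⟩ := ha
  have hp : Prime (MvPolynomial.X 0 : MvPolynomial (Fin 2) k) := MvPolynomial.X_prime
  rcases hp.dvd_or_dvd (Dvd.intro _ hg) with ⟨q, hq⟩ | ⟨q, rfl⟩
  · exfalso
    -- Evaluating at `x = 0`, `t = 1` separates `t² + xʰ` from the multiples of `x`.
    have := congrArg (MvPolynomial.eval (![0, 1] : Fin 2 → k)) hq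
    simp [show h ≠ 0 by omega] at this
  · exact ⟨q, mul_left_cancel₀ hp.ne_zero (by rw [hg]; ring)⟩

theorem xS'_pow_cancel (k : Type*) [Field k] (h : ℕ) (hh : 2 ≤ h) (n : ℕ) {a b : S'ring k h}
    (hab : xS' k h ^ n * a = xS' k h ^ n * b) : a = b := by
  induction n with
  | zero => simpa using hab
  | succ n ih =>
    refine ih (sub_eq_zero.mp (xS'_mul_eq_zero k h hh _ ?_))
    linear_combination hab

/-- An endomorphism of `I` is multiplication by the fraction `φ(xⁱ) / xⁱ`. -/
theorem xS'_pow_mul_apply (k : Type*) [Field k] (h i : ℕ)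
    (φ : I'mod k h i →ₗ[S'ring k h] I'mod k h i) (m : I'mod k h i) :
    xS' k h ^ i * (φ m : S'ring k h) = (φ (xEl' k h i) : S'ring k h) * (m : S'ring k h) := by
  have e : xS' k h ^ i • m = (m : S'ring k h) • xEl' k h i :=
    Subtype.ext (mul_comm (xS' k h ^ i) (m : S'ring k h))
  have e2 := congrArg (fun z => ((φ z : I'mod k h i) : S'ring k h)) e
  simp only [map_smul, Submodule.coe_smul, smul_eq_mul] at e2
  rw [e2, mul_comm]

/-- The inclusion `t I ⊆ xⁱ I`, which makes division of `t m` by `xⁱ` possible inside `I`. -/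
theorem exists_xS'_pow_mul_eq (k : Type*) [Field k] (h i : ℕ) (h2i : 2 * i ≤ h)
    (m : I'mod k h i) :
    ∃ n : I'mod k h i, xS' k h ^ i * (n : S'ring k h) = tS' k h * (m : S'ring k h) := by
  obtain ⟨a, b, hab⟩ := Ideal.mem_span_pair.mp m.2
  refine ⟨⟨b * tS' k h + (-a * xS' k h ^ (h - 2 * i)) * xS' k h ^ i,
    Ideal.mem_span_pair.mpr ⟨_, _, rfl⟩⟩, ?_⟩
  have e : xS' k h ^ h = xS' k h ^ (h - 2 * i) * xS' k h ^ i * xS' k h ^ i := by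
    rw [← pow_add, ← pow_add]; congr 1; omega
  have ht := tS'_sq k h
  rw [e] at ht
  rw [← hab]
  linear_combination (-a) * ht

/-- `1 ≤ i`, `2i ≤ h`: there is a unique `S′`-linear endomorphism
`α` of `I = (t, xⁱ)` with `α(t) = −x^{h−i}` and `α(xⁱ) = t`; it satisfies
`α ∘ α = ` multiplication by `−x^{h−2i}`, and every `S′`-linear endomorphism of
`I` is of the form `s₁·α + s₂·id`. -/
theorem end_I_S' (k : Type*) [Field k] (h i : ℕ) (hh : 2 ≤ h) (hi : 1 ≤ i)
    (h2i : 2 * i ≤ h) :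
    (∃! α : I'mod k h i →ₗ[S'ring k h] I'mod k h i,
      (α (tEl' k h i) : S'ring k h) = -(xS' k h ^ (h - i)) ∧
      (α (xEl' k h i) : S'ring k h) = tS' k h) ∧
    (∀ α : I'mod k h i →ₗ[S'ring k h] I'mod k h i,
      ((α (tEl' k h i) : S'ring k h) = -(xS' k h ^ (h - i)) ∧
       (α (xEl' k h i) : S'ring k h) = tS' k h) →
      (∀ m : I'mod k h i,
        ((α (α m)) : S'ring k h) = -(xS' k h ^ (h - 2 * i)) * (m : S'ring k h)) ∧
      (∀ φ : I'mod k h i →ₗ[S'ring k h] I'mod k h i,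
        ∃ s₁ s₂ : S'ring k h, φ = s₁ • α + s₂ • LinearMap.id)) := by
  have key : ∀ α : I'mod k h i →ₗ[S'ring k h] I'mod k h i,
      (α (xEl' k h i) : S'ring k h) = tS' k h → ∀ m : I'mod k h i,
      xS' k h ^ i * (α m : S'ring k h) = tS' k h * (m : S'ring k h) := fun α hα m => by
    rw [xS'_pow_mul_apply, hα]
  have e1 : xS' k h ^ h = xS' k h ^ i * xS' k h ^ (h - i) := by
    rw [← pow_add]; congr 1; omega
  have e2 : xS' k h ^ h = xS' k h ^ i * xS' k h ^ i * xS' k h ^ (h - 2 * i) := by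
    rw [← pow_add, ← pow_add]; congr 1; omega
  have ht := tS'_sq k h
  refine ⟨?_, ?_⟩
  · choose f hf using exists_xS'_pow_mul_eq k h i h2i
    let α : I'mod k h i →ₗ[S'ring k h] I'mod k h i :=
      { toFun := f
        map_add' := fun m n => Subtype.ext (xS'_pow_cancel k h hh i (by
          rw [hf, Submodule.coe_add, Submodule.coe_add, mul_add, mul_add, hf, hf]))
        map_smul' := fun s m => Subtype.ext (xS'_pow_cancel k h hh i (by
          rw [hf, RingHom.id_apply, Submodule.coe_smul, Submodule.coe_smul, smul_eq_mul,
            smul_eq_mul]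
          linear_combination (-s) * hf m)) }
    refine ⟨α, ⟨xS'_pow_cancel k h hh i ?_, xS'_pow_cancel k h hh i ?_⟩, ?_⟩
    · refine (hf _).trans ?_
      change tS' k h * tS' k h = _
      linear_combination ht - e1
    · refine (hf _).trans ?_
      exact mul_comm (tS' k h) (xS' k h ^ i)
    · rintro β ⟨-, hβ⟩
      refine LinearMap.ext fun m => Subtype.ext (xS'_pow_cancel k h hh i ?_)
      rw [key β hβ m]
      exact (hf m).symm
  · rintro α ⟨-, hα⟩
    refine ⟨fun m => ?_, fun φ => ?_⟩
    · refine xS'_pow_cancel k h hh i (xS'_pow_cancel k h hh i ?_)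
      rw [key α hα]
      linear_combination tS' k h * key α hα m + (m : S'ring k h) * ht - (m : S'ring k h) * e2
    · obtain ⟨a, b, hab⟩ := Ideal.mem_span_pair.mp (φ (xEl' k h i)).2
      refine ⟨a, b, LinearMap.ext fun m => Subtype.ext (xS'_pow_cancel k h hh i ?_)⟩
      rw [xS'_pow_mul_apply, ← hab]
      simp only [LinearMap.add_apply, LinearMap.smul_apply, LinearMap.id_apply,
        Submodule.coe_add, Submodule.coe_smul, smul_eq_mul]
      linear_combination (-a) * key α hα m
end

section
/- In the mesh category k(ℤA_{h−1}/T^c), the image of every path of length at least h is zero. Equivalently, in the quotient of the path algebra of Γ by the two-sided ideal generated by the mesh relations, every composite of h composable arrows vanishes. -/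
/-!
Write `U` for an arrow `a` (raising the row) and `D` for an arrow `b` (lowering it). The mesh
relations say that `DU = -UD` in the middle rows, while `UD = 0` at the bottom row and `DU = 0` at
the top row (composites read from left to right). Hence, modulo the mesh ideal, any `D` occurring in
a path can be moved to its end, up to a scalar, and if the path ends in the top row then the path
vanishes (`move_down`). Peeling off final `D`s one by one, a path ending in the zero-based row `e`
vanishes as soon as it contains at least `h - 1 - e` arrows `D` (`mem_of_downs`). Symmetrically, it
vanishes as soon as it contains at least `e + 1` arrows `U` (`move_up`, `mem_of_ups`). A path in
which neither happens has at most `(h - 2 - e) + e = h - 2` arrows.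
-/

/- The translation quiver `Γ = ℤA_{h−1}/T^c`.  Vertices are pairs
`(n, v) : ZMod c × Fin (h-1)`, where the value `v` represents the row index
`i = v + 1 ∈ {1, …, h−1}`.  The arrow `a_{n,i} : (n, i) → (n, i+1)`
(for `1 ≤ i ≤ h−2`) is `MeshArrow.a n j hj` with `j = i − 1`, and the arrow
`b_{n,i} : (n, i+1) → (n+1, i)` is `MeshArrow.b n j hj` with `j = i − 1`. -/

/-- The arrows of the quiver `ℤA_{h−1}/T^c`. -/
inductive MeshArrow (c h : ℕ) : ZMod c × Fin (h - 1) → ZMod c × Fin (h - 1) → Type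
  | a (n : ZMod c) (j : ℕ) (hj : j + 1 < h - 1) :
      MeshArrow c h (n, ⟨j, by omega⟩) (n, ⟨j + 1, hj⟩)
  | b (n : ZMod c) (j : ℕ) (hj : j + 1 < h - 1) :
      MeshArrow c h (n, ⟨j + 1, hj⟩) (n + 1, ⟨j, by omega⟩)

instance meshQuiver (c h : ℕ) : Quiver (ZMod c × Fin (h - 1)) :=
  ⟨MeshArrow c h⟩

/-- The free `k`-module on the paths of `Γ` from `u` to `v`: the Hom-spaces of
the path category, linearised over `k`. -/
abbrev kPath (k : Type*) [Field k] (c h : ℕ) (u v : ZMod c × Fin (h - 1)) : Type _ :=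
  Quiver.Path u v →₀ k

/-- The path `(n, j) → (n, j+1) → (n+1, j)`, i.e. `b_{n,j+1} ∘ a_{n,j+1}`. -/
def lowPath (c h : ℕ) (n : ZMod c) (j : ℕ) (hj : j + 1 < h - 1) :
    Quiver.Path ((n, ⟨j, by omega⟩) : ZMod c × Fin (h - 1)) (n + 1, ⟨j, by omega⟩) :=
  (Quiver.Path.nil.cons (MeshArrow.a n j hj)).cons (MeshArrow.b n j hj)

/-- The path `(n, m+1) → (n+1, m) → (n+1, m+1)`, i.e. `a_{n+1,m+1} ∘ b_{n,m+1}`. -/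
def highPath (c h : ℕ) (n : ZMod c) (m : ℕ) (hm : m + 1 < h - 1) :
    Quiver.Path ((n, ⟨m + 1, hm⟩) : ZMod c × Fin (h - 1)) (n + 1, ⟨m + 1, hm⟩) :=
  (Quiver.Path.nil.cons (MeshArrow.b n m hm)).cons (MeshArrow.a (n + 1) m hm)

/-- The mesh relation starting at the vertex `(n, j)`:
`b_{n,1} a_{n,1}` for `j = 0` (i.e. `i = 1`); `a_{n+1,i−1} b_{n,i−1} + b_{n,i} a_{n,i}`
in the middle; `a_{n+1,h−2} b_{n,h−2}` at the top (`i = h−1`). -/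
noncomputable def mesh (k : Type*) [Field k] (c h : ℕ) (n : ZMod c) :
    ∀ (j : ℕ) (hj : j < h - 1), kPath k c h (n, ⟨j, hj⟩) (n + 1, ⟨j, hj⟩)
  | 0, _ =>
      if h1 : 0 + 1 < h - 1 then Finsupp.single (lowPath c h n 0 h1) 1 else 0
  | m + 1, hj =>
      (if h1 : (m + 1) + 1 < h - 1 then Finsupp.single (lowPath c h n (m + 1) h1) 1
        else 0) + Finsupp.single (highPath c h n m hj) 1

/-- Pre- and post-composition with fixed paths `q` and `p`, extended
`k`-linearly. -/
noncomputable def conj (k : Type*) [Field k] (c h : ℕ)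
    {u s t v : ZMod c × Fin (h - 1)} (q : Quiver.Path u s) (p : Quiver.Path t v) :
    kPath k c h s t →ₗ[k] kPath k c h u v :=
  Finsupp.lmapDomain k k fun r => (q.comp r).comp p

/-- The component from `u` to `v` of the two-sided ideal of the linearised path
category generated by the mesh relations: the `k`-span of all elements
`q · mesh · p`. -/
noncomputable def meshIdeal (k : Type*) [Field k] (c h : ℕ)
    (u v : ZMod c × Fin (h - 1)) : Submodule k (kPath k c h u v) :=
  Submodule.span k
    { z | ∃ (n : ZMod c) (j : ℕ) (hj : j < h - 1)
        (q : Quiver.Path u ((n, ⟨j, hj⟩) : ZMod c × Fin (h - 1)))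
        (p : Quiver.Path ((n + 1, ⟨j, hj⟩) : ZMod c × Fin (h - 1)) v),
        z = conj k c h q p (mesh k c h n j hj) }

section MeshAux

variable {k : Type*} [Field k] {c h : ℕ} {u v w : ZMod c × Fin (h - 1)}

/-- `1` for a lowering arrow `b`, `0` for a raising arrow `a`. -/
def MeshArrow.down : ∀ {x y : ZMod c × Fin (h - 1)}, MeshArrow c h x y → ℕ
  | _, _, .a _ _ _ => 0
  | _, _, .b _ _ _ => 1

/-- The number of lowering arrows `b` in a path. -/
def downs : ∀ {v : ZMod c × Fin (h - 1)}, Quiver.Path u v → ℕ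
  | _, .nil => 0
  | _, .cons p e => downs p + MeshArrow.down e

/-- The number of raising arrows `a` in a path. -/
def ups : ∀ {v : ZMod c × Fin (h - 1)}, Quiver.Path u v → ℕ
  | _, .nil => 0
  | _, .cons p e => ups p + (1 - MeshArrow.down e)

theorem ups_add_downs (p : Quiver.Path u v) : ups p + downs p = p.length := by
  induction p with
  | nil => rfl
  | cons p e ih =>
    change MeshArrow c h _ _ at e
    cases e <;> simp only [ups, downs, MeshArrow.down, Quiver.Path.length_cons] <;> omega

/-- Post-composition with an arrow, extended `k`-linearly. -/
noncomputable def consMap (k : Type*) [Field k] (u : ZMod c × Fin (h - 1))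
    (e : MeshArrow c h v w) : kPath k c h u v →ₗ[k] kPath k c h u w :=
  Finsupp.lmapDomain k k fun r => r.cons e

theorem consMap_single (e : MeshArrow c h v w) (p : Quiver.Path u v) (x : k) :
    consMap k u e (Finsupp.single p x) = Finsupp.single (p.cons e) x := by
  simp [consMap]

theorem consMap_mem (e : MeshArrow c h v w) {z : kPath k c h u v}
    (hz : z ∈ meshIdeal k c h u v) : consMap k u e z ∈ meshIdeal k c h u w := by
  have : meshIdeal k c h u v ≤ (meshIdeal k c h u w).comap (consMap k u e) := by
    refine Submodule.span_le.2 ?_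
    rintro _ ⟨n, j, hj, q, p, rfl⟩
    refine Submodule.subset_span ⟨n, j, hj, q, p.cons e, ?_⟩
    simp only [consMap, conj, Finsupp.lmapDomain_apply, ← Finsupp.mapDomain_comp]
    rfl
  exact this hz

theorem cons_mem (e : MeshArrow c h v w) {p : Quiver.Path u v}
    (hp : (Finsupp.single p 1 : kPath k c h u v) ∈ meshIdeal k c h u v) :
    (Finsupp.single (p.cons e) 1 : kPath k c h u w) ∈ meshIdeal k c h u w := by
  simpa only [consMap_single] using consMap_mem e hp

theorem conj_mesh_mem (n : ZMod c) (j : ℕ) (hj : j < h - 1)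
    (q : Quiver.Path u ((n, ⟨j, hj⟩) : ZMod c × Fin (h - 1))) :
    conj k c h q .nil (mesh k c h n j hj) ∈ meshIdeal k c h u _ :=
  Submodule.subset_span ⟨n, j, hj, q, .nil, rfl⟩

/-- The mesh relation at the bottom row: `UD = 0`. -/
theorem bottom_mem (n : ZMod c) (hj : 0 + 1 < h - 1)
    (q : Quiver.Path u ((n, ⟨0, by omega⟩) : ZMod c × Fin (h - 1))) :
    (Finsupp.single ((q.cons (MeshArrow.a n 0 hj)).cons (MeshArrow.b n 0 hj)) 1 :
      kPath k c h u _) ∈ meshIdeal k c h u _ := by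
  have := conj_mesh_mem (k := k) n 0 (by omega) q
  rw [mesh, dif_pos hj] at this
  simpa [conj, lowPath] using this

/-- The mesh relation at the top row: `DU = 0`. -/
theorem top_mem (n : ZMod c) (j : ℕ) (hj : j + 1 < h - 1) (ht : ¬ (j + 1) + 1 < h - 1)
    (q : Quiver.Path u ((n, ⟨j + 1, hj⟩) : ZMod c × Fin (h - 1))) :
    (Finsupp.single ((q.cons (MeshArrow.b n j hj)).cons (MeshArrow.a (n + 1) j hj)) 1 :
      kPath k c h u _) ∈ meshIdeal k c h u _ := by
  have := conj_mesh_mem (k := k) n (j + 1) hj q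
  rw [mesh, dif_neg ht] at this
  simpa [conj, highPath] using this

/-- The mesh relation at a middle row: `UD + DU = 0`. -/
theorem middle_mem (n : ZMod c) (j : ℕ) (hj : j + 1 < h - 1) (ht : (j + 1) + 1 < h - 1)
    (q : Quiver.Path u ((n, ⟨j + 1, hj⟩) : ZMod c × Fin (h - 1))) :
    (Finsupp.single ((q.cons (MeshArrow.a n (j + 1) ht)).cons (MeshArrow.b n (j + 1) ht)) 1 +
      Finsupp.single ((q.cons (MeshArrow.b n j hj)).cons (MeshArrow.a (n + 1) j hj)) 1 :
      kPath k c h u _) ∈ meshIdeal k c h u _ := by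
  have := conj_mesh_mem (k := k) n (j + 1) hj q
  rw [mesh, dif_pos ht, map_add] at this
  simpa [conj, highPath, lowPath] using this

/-- Modulo the mesh ideal, a path containing a `D` is zero or a scalar multiple of a path
ending in `D` with the same number of `D`s. -/
theorem move_down (p : Quiver.Path u v) (hp : 1 ≤ downs p) :
    (Finsupp.single p 1 : kPath k c h u v) ∈ meshIdeal k c h u v ∨
    ∃ (w : ZMod c × Fin (h - 1)) (e : MeshArrow c h w v) (q : Quiver.Path u w) (x : k),
      e.down = 1 ∧ downs q + 1 = downs p ∧
      Finsupp.single p 1 - x • Finsupp.single (q.cons e) 1 ∈ meshIdeal k c h u v := by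
  induction p with
  | nil => simp [downs] at hp
  | cons p e ih =>
    change MeshArrow c h _ _ at e
    cases e with
    | b n j hj => exact Or.inr ⟨_, .b n j hj, p, 1, rfl, rfl, by simp⟩
    | a n j hj =>
      rcases ih hp with hI | ⟨w, e, q, x, he, hq, hI⟩
      · exact Or.inl (cons_mem _ hI)
      · have hI' := consMap_mem (MeshArrow.a n j hj) hI
        cases e with
        | a => simp [MeshArrow.down] at he
        | b n j hj =>
          rw [map_sub, map_smul, consMap_single, consMap_single] at hI'
          by_cases ht : (j + 1) + 1 < h - 1
          · refine Or.inr ⟨_, .b n (j + 1) ht, q.cons (.a n (j + 1) ht), -x, rfl, hq, ?_⟩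
            -- `p - (-x) UD = (p - x DU) + x (UD + DU)`
            convert Submodule.add_mem _ hI'
              (Submodule.smul_mem _ x (middle_mem n j hj ht q)) using 1
            module
          · refine Or.inl ?_
            convert Submodule.add_mem _ hI'
              (Submodule.smul_mem _ x (top_mem n j hj ht q)) using 1
            module

/-- Modulo the mesh ideal, a path containing a `U` is zero or a scalar multiple of a path
ending in `U` with the same number of `U`s. -/
theorem move_up (p : Quiver.Path u v) (hp : 1 ≤ ups p) :
    (Finsupp.single p 1 : kPath k c h u v) ∈ meshIdeal k c h u v ∨
    ∃ (w : ZMod c × Fin (h - 1)) (e : MeshArrow c h w v) (q : Quiver.Path u w) (x : k),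
      e.down = 0 ∧ ups q + 1 = ups p ∧
      Finsupp.single p 1 - x • Finsupp.single (q.cons e) 1 ∈ meshIdeal k c h u v := by
  induction p with
  | nil => simp [ups] at hp
  | cons p e ih =>
    change MeshArrow c h _ _ at e
    cases e with
    | a n j hj => exact Or.inr ⟨_, .a n j hj, p, 1, rfl, rfl, by simp⟩
    | b n j hj =>
      rcases ih hp with hI | ⟨w, e, q, x, he, hq, hI⟩
      · exact Or.inl (cons_mem _ hI)
      · have hI' := consMap_mem (MeshArrow.b n j hj) hI
        cases e with
        | b => simp [MeshArrow.down] at he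
        | a =>
          rw [map_sub, map_smul, consMap_single, consMap_single] at hI'
          cases j with
          | succ i =>
            have hi : i + 1 < h - 1 := by omega
            refine Or.inr ⟨_, .a (n + 1) i hi, q.cons (.b n i hi), -x, rfl, hq, ?_⟩
            -- `p - (-x) DU = (p - x UD) + x (UD + DU)`
            convert Submodule.add_mem _ hI'
              (Submodule.smul_mem _ x (middle_mem n i hi hj q)) using 1
            module
          | zero =>
            refine Or.inl ?_
            convert Submodule.add_mem _ hI'
              (Submodule.smul_mem _ x (bottom_mem n hj q)) using 1
            module

theorem mem_of_sub_smul {p q : Quiver.Path u v} {x : k}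
    (hI : Finsupp.single p 1 - x • Finsupp.single q 1 ∈ meshIdeal k c h u v)
    (hq : (Finsupp.single q 1 : kPath k c h u v) ∈ meshIdeal k c h u v) :
    (Finsupp.single p 1 : kPath k c h u v) ∈ meshIdeal k c h u v := by
  simpa using Submodule.add_mem _ hI (Submodule.smul_mem _ x hq)

/-- Each step removes one final `D`, whose source lies one row higher, so that the sum of the end
row and the number of `D`s is unchanged; without `D`s it is less than `h - 1`. -/
theorem mem_of_downs (d : ℕ) : ∀ {v : ZMod c × Fin (h - 1)} (p : Quiver.Path u v),
    downs p = d → h - 1 ≤ v.2.val + d →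
    (Finsupp.single p 1 : kPath k c h u v) ∈ meshIdeal k c h u v := by
  induction d with
  | zero => intro v p _ hv; have := v.2.isLt; omega
  | succ d ih =>
    intro v p hd hv
    rcases move_down (k := k) p (by omega) with hI | ⟨w, e, q, x, he, hq, hI⟩
    · exact hI
    · refine mem_of_sub_smul hI (cons_mem e (ih q (by omega) ?_))
      cases e with
      | a => simp [MeshArrow.down] at he
      | b n j hj => simp only at hv ⊢; omega

/-- Each step removes one final `U`, whose source lies one row lower, so that the end row stays
less than the number of `U`s; without `U`s this is impossible. -/
theorem mem_of_ups (d : ℕ) : ∀ {v : ZMod c × Fin (h - 1)} (p : Quiver.Path u v),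
    ups p = d → v.2.val < d →
    (Finsupp.single p 1 : kPath k c h u v) ∈ meshIdeal k c h u v := by
  induction d with
  | zero => intro v p _ hv; omega
  | succ d ih =>
    intro v p hd hv
    rcases move_up (k := k) p (by omega) with hI | ⟨w, e, q, x, he, hq, hI⟩
    · exact hI
    · refine mem_of_sub_smul hI (cons_mem e (ih q (by omega) ?_))
      cases e with
      | b => simp [MeshArrow.down] at he
      | a n j hj => simp only at hv ⊢; omega

end MeshAux

/-- in the mesh category `k(ℤA_{h−1}/T^c)`, the image of every
path of length at least `h` is zero; equivalently, in the quotient of the path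
algebra by the two-sided ideal generated by the mesh relations, every composite
of `h` composable arrows vanishes. -/
theorem mesh_category_path_zero (k : Type*) [Field k] (c h : ℕ)
    (hc : 1 ≤ c) (hh : 2 ≤ h) (u v : ZMod c × Fin (h - 1))
    (p : Quiver.Path u v) (hp : h ≤ p.length) :
    (Finsupp.single p 1 : kPath k c h u v) ∈ meshIdeal k c h u v := by
  have hl := ups_add_downs p
  by_cases hv : v.2.val < ups p
  · exact mem_of_ups _ p rfl hv
  · exact mem_of_downs _ p rfl (by omega)
end
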